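/- (Zangwill's global convergence theorem.) Let Phi be a point-to-set map from R^D to subsets of R^D, let (x_k) be a sequence with x_{k+1} in Phi(x_k) for all k, and let Gamma be a subset of R^D (the solution set). Assume: (1) all x_k lie in a compact set S contained in R^D; (2) Phi is closed on the complement of Gamma, i.e., for every x* not in Gamma, whenever x_k -> x*, y_k in Phi(x_k), and y_k -> y*, one has y* in Phi(x*); (3) there is a continuous function alpha : R^D -> R such that alpha(x') > alpha(x) for all x' in Phi(x) whenever x is not in Gamma, and alpha(x') >= alpha(x) for all x' in Phi(x) whenever x is in Gamma. Then every limit point of (x_k) lies in Gamma, and alpha(x_k) converges monotonically to alpha(x*) for some x* in Gamma. -/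

import Mathlib

/-- **Zangwill's global convergence theorem.**  Let `Φ` be a
point-to-set map on `ℝ^D`, let `(x k)` satisfy `x (k+1) ∈ Φ (x k)`, and let
`Γ` be a solution set.  Suppose (1) all iterates lie in a compact set `K`,
(2) `Φ` is closed on the complement of `Γ`, and (3) there is a continuous
`α : ℝ^D → ℝ` which strictly increases along `Φ` outside `Γ` and does not
decrease along `Φ` on `Γ`.  Then every limit point of `(x k)` lies in `Γ`,
and `α (x k)` converges monotonically to `α x*` for some `x* ∈ Γ`. -/
theorem zangwill_global_convergence {D : ℕ}
    (Φ : (Fin D → ℝ) → Set (Fin D → ℝ))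
    (x : ℕ → Fin D → ℝ)
    (hx : ∀ k, x (k + 1) ∈ Φ (x k))
    (Γ : Set (Fin D → ℝ))
    (K : Set (Fin D → ℝ)) (hK : IsCompact K) (hxK : ∀ k, x k ∈ K)
    (hclosed : ∀ xstar ∉ Γ, ∀ (u y : ℕ → Fin D → ℝ) (ystar : Fin D → ℝ),
      Filter.Tendsto u Filter.atTop (nhds xstar) →
      (∀ k, y k ∈ Φ (u k)) →
      Filter.Tendsto y Filter.atTop (nhds ystar) →
      ystar ∈ Φ xstar)
    (α : (Fin D → ℝ) → ℝ) (hα : Continuous α)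
    (hinc : ∀ z ∉ Γ, ∀ z' ∈ Φ z, α z < α z')
    (hmono : ∀ z ∈ Γ, ∀ z' ∈ Φ z, α z ≤ α z') :
    (∀ p : Fin D → ℝ, MapClusterPt p Filter.atTop x → p ∈ Γ) ∧
    ∃ xstar ∈ Γ, Monotone (fun k => α (x k)) ∧
      Filter.Tendsto (fun k => α (x k)) Filter.atTop (nhds (α xstar)) := by
  have hm : Monotone (fun k => α (x k)) := by
    refine monotone_nat_of_le_succ fun k => ?_
    by_cases h : x k ∈ Γ
    · exact hmono _ h _ (hx k)
    · exact (hinc _ h _ (hx k)).le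
  obtain ⟨q, -, φ, hφ, hq⟩ := hK.tendsto_subseq hxK
  have hlim : Filter.Tendsto (fun k => α (x k)) Filter.atTop (nhds (α q)) :=
    (tendsto_iff_tendsto_subseq_of_monotone hm hφ.tendsto_atTop).2 ((hα.tendsto q).comp hq)
  have key : ∀ p (ψ : ℕ → ℕ), StrictMono ψ →
      Filter.Tendsto (x ∘ ψ) Filter.atTop (nhds p) → p ∈ Γ := by
    intro p ψ hψ hp
    by_contra hpΓ
    obtain ⟨r, -, θ, hθ, hr⟩ := hK.tendsto_subseq (fun k => hxK (ψ k + 1))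
    have hψθ : Filter.Tendsto (fun k => ψ (θ k)) Filter.atTop Filter.atTop :=
      hψ.tendsto_atTop.comp hθ.tendsto_atTop
    have hr' : Filter.Tendsto (fun k => x (ψ (θ k) + 1)) Filter.atTop (nhds r) := hr
    have hp' : Filter.Tendsto (fun k => x (ψ (θ k))) Filter.atTop (nhds p) :=
      hp.comp hθ.tendsto_atTop
    have hmem := hclosed p hpΓ _ _ r hp' (fun k => hx (ψ (θ k))) hr'
    have h1 : α p = α q :=
      tendsto_nhds_unique ((hα.tendsto p).comp hp') (hlim.comp hψθ)
    have h2 : α r = α q :=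
      tendsto_nhds_unique ((hα.tendsto r).comp hr')
        (hlim.comp ((Filter.tendsto_add_atTop_nat 1).comp hψθ))
    have := hinc p hpΓ r hmem
    linarith
  refine ⟨fun p hp => ?_, q, key q φ hφ hq, hm, hlim⟩
  obtain ⟨ψ, hψ, hp⟩ := TopologicalSpace.FirstCountableTopology.tendsto_subseq hp
  exact key p ψ hψ hp
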